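/- arXiv:2310.14352 — 4 statements merged into one kernel-verified Lean document; each statement's English description precedes it below -/
import Mathlib

section
/- For every integer a, the polynomial f(x) = x^3 - a x^2 - (a+3) x - 1 is irreducible over ℚ, and its splitting field over ℚ has degree 3; in particular f defines a cyclic cubic Galois extension of ℚ. -/
open Polynomial

/-! Modulo `2` the Shanks polynomial takes the value `1` at both elements of `𝔽₂`, so it is
irreducible there; being monic it is then irreducible over `ℤ`, hence over `ℚ` by Gauss's lemma.
The substitution `r ↦ -1 / (1 + r)` has order three and permutes the roots, so one root `r` yields
the others, `-1 / (1 + r)` and `-(1 + r) / r`, as elements of the field it generates. Adjoining a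
single root therefore already gives the splitting field. -/

/-- The Shanks polynomial `x ^ 3 - a x ^ 2 - (a + 3) x - 1`, for a parameter `a` in any commutative
ring, so that it can be reduced modulo `2` and base-changed to the field generated by a root. -/
noncomputable def shanksPolynomial {R : Type*} [CommRing R] (a : R) : R[X] :=
  X ^ 3 - C a * X ^ 2 - C (a + 3) * X - 1

section CommRing

variable {R S : Type*} [CommRing R] [CommRing S]

theorem natDegree_shanksPolynomial [Nontrivial R] (a : R) :
    (shanksPolynomial a).natDegree = 3 := by
  unfold shanksPolynomial
  compute_degree!

theorem monic_shanksPolynomial (a : R) : (shanksPolynomial a).Monic := by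
  unfold shanksPolynomial
  monicity!

theorem map_shanksPolynomial (φ : R →+* S) (a : R) :
    (shanksPolynomial a).map φ = shanksPolynomial (φ a) := by
  simp [shanksPolynomial, map_ofNat φ 3]

theorem isRoot_shanksPolynomial {a r : R} :
    (shanksPolynomial a).IsRoot r ↔ r ^ 3 - a * r ^ 2 - (a + 3) * r - 1 = 0 := by
  simp [shanksPolynomial]

theorem shanksPolynomial_eq_prod_of_vieta {a r s t : R} (sum_eq : r + s + t = a)
    (sum_mul_eq : r * s + s * t + t * r = -(a + 3)) (prod_eq : r * s * t = 1) :
    shanksPolynomial a = (X - C r) * (X - C s) * (X - C t) :=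
  calc
    shanksPolynomial a
        = X ^ 3 - C (r + s + t) * X ^ 2 + C (r * s + s * t + t * r) * X - C (r * s * t) := by
      rw [sum_eq, sum_mul_eq, prod_eq, shanksPolynomial, C_neg, C_1]
      ring
    _ = (X - C r) * (X - C s) * (X - C t) := by
      simp only [C_add, C_mul]
      ring

end CommRing

theorem irreducible_shanksPolynomial_zmod_two (a : ZMod 2) :
    Irreducible (shanksPolynomial a) := by
  have no_root (x : ZMod 2) : ¬ (shanksPolynomial a).IsRoot x := by
    rw [isRoot_shanksPolynomial]
    revert a x
    decide
  have natDegree_mem : (shanksPolynomial a).natDegree ∈ Finset.Icc 1 3 := by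
    rw [natDegree_shanksPolynomial]
    decide
  exact irreducible_of_degree_le_three_of_not_isRoot natDegree_mem no_root

theorem irreducible_shanksPolynomial_of_ringHom_zmod_two {R : Type*} [CommRing R] [IsDomain R]
    (φ : R →+* ZMod 2) (a : R) : Irreducible (shanksPolynomial a) := by
  refine (monic_shanksPolynomial a).irreducible_of_irreducible_map φ _ ?_
  rw [map_shanksPolynomial]
  exact irreducible_shanksPolynomial_zmod_two (φ a)

theorem irreducible_shanksPolynomial_algebraMap {R K : Type*} [CommRing R] [IsDomain R]
    [IsIntegrallyClosed R] [Field K] [Algebra R K] [IsFractionRing R K] {a : R}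
    (ha : Irreducible (shanksPolynomial a)) :
    Irreducible (shanksPolynomial (algebraMap R K a)) := by
  rw [← map_shanksPolynomial]
  exact (monic_shanksPolynomial a).irreducible_iff_irreducible_map_fraction_map.mp ha

section Field

variable {K : Type*} [Field K]

theorem shanksPolynomial_eq_prod_of_isRoot {a r : K} (hr : (shanksPolynomial a).IsRoot r) :
    shanksPolynomial a = (X - C r) * (X - C (-1 / (1 + r))) * (X - C (-(1 + r) / r)) := by
  rw [isRoot_shanksPolynomial] at hr
  have r_ne_zero : r ≠ 0 := by
    rintro rfl
    simp at hr
  have one_add_r_ne_zero : 1 + r ≠ 0 := fun h ↦ one_ne_zero (α := K) <| by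
    linear_combination hr - (r ^ 2 - (a + 1) * r - 2) * h
  apply shanksPolynomial_eq_prod_of_vieta
  · field_simp
    linear_combination hr
  · field_simp
    linear_combination -hr
  · field_simp

theorem splits_shanksPolynomial_of_isRoot {a r : K} (hr : (shanksPolynomial a).IsRoot r) :
    (shanksPolynomial a).Splits := by
  rw [shanksPolynomial_eq_prod_of_isRoot hr]
  exact ((Splits.X_sub_C _).mul (Splits.X_sub_C _)).mul (Splits.X_sub_C _)

theorem isSplittingField_adjoinRoot_of_splits {f : K[X]} [Fact (Irreducible f)]
    (hf : (f.map (AdjoinRoot.of f)).Splits) : IsSplittingField K (AdjoinRoot f) f where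
  splits' := hf
  adjoin_rootSet' := by
    have root_mem : AdjoinRoot.root f ∈ f.rootSet (AdjoinRoot f) :=
      mem_rootSet.mpr ⟨(Fact.out : Irreducible f).ne_zero, by simp⟩
    rw [eq_top_iff, ← AdjoinRoot.adjoinRoot_eq_top]
    exact Algebra.adjoin_mono (Set.singleton_subset_iff.mpr root_mem)

theorem finrank_splittingField_of_splits_adjoinRoot {f : K[X]} [Fact (Irreducible f)]
    (hf : (f.map (AdjoinRoot.of f)).Splits) :
    Module.finrank K f.SplittingField = f.natDegree := by
  have := isSplittingField_adjoinRoot_of_splits hf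
  rw [← (IsSplittingField.algEquiv (AdjoinRoot f) f).toLinearEquiv.finrank_eq]
  exact finrank_quotient_span_eq_natDegree

theorem finrank_splittingField_shanksPolynomial {a : K} (ha : Irreducible (shanksPolynomial a)) :
    Module.finrank K (shanksPolynomial a).SplittingField = 3 := by
  have := Fact.mk ha
  have splits_adjoinRoot :
      ((shanksPolynomial a).map (AdjoinRoot.of (shanksPolynomial a))).Splits := by
    have root_isRoot := AdjoinRoot.isRoot_root (shanksPolynomial a)
    rw [map_shanksPolynomial] at root_isRoot ⊢
    exact splits_shanksPolynomial_of_isRoot root_isRoot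
  rw [finrank_splittingField_of_splits_adjoinRoot splits_adjoinRoot, natDegree_shanksPolynomial]

end Field

theorem shanks_cubic_irreducible_splittingField_degree_three_general {R K : Type*}
    [CommRing R] [IsDomain R] [IsIntegrallyClosed R] [Field K] [Algebra R K] [IsFractionRing R K]
    (φ : R →+* ZMod 2) (a : R) :
    Irreducible (shanksPolynomial (algebraMap R K a)) ∧
      Module.finrank K (shanksPolynomial (algebraMap R K a)).SplittingField = 3 :=
  have irreducible_over_fractions : Irreducible (shanksPolynomial (algebraMap R K a)) :=
    irreducible_shanksPolynomial_algebraMap (irreducible_shanksPolynomial_of_ringHom_zmod_two φ a)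
  ⟨irreducible_over_fractions, finrank_splittingField_shanksPolynomial irreducible_over_fractions⟩

/-- For every integer `a`, the Shanks polynomial `f(x) = x^3 - a x^2 - (a+3) x - 1`
is irreducible over `ℚ` and its splitting field over `ℚ` has degree `3`;
in particular it defines a cyclic cubic Galois extension of `ℚ`. -/
theorem shanks_cubic_irreducible_splittingField_degree_three (a : ℤ) :
    Irreducible (X ^ 3 - C (a : ℚ) * X ^ 2 - C ((a : ℚ) + 3) * X - 1) ∧
      Module.finrank ℚ
        (X ^ 3 - C (a : ℚ) * X ^ 2 - C ((a : ℚ) + 3) * X - 1 : ℚ[X]).SplittingField = 3 := by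
  exact shanks_cubic_irreducible_splittingField_degree_three_general (Int.castRingHom (ZMod 2)) a
end

section
/- Let ℓ be a prime with ℓ ≡ 1 (mod 3), and let L be the unique degree-3 intermediate field of ℚ(ζ_ℓ)/ℚ. If p is a prime with p ≡ 2 (mod 3), then the p-rank of the ideal class group of L is even; that is, the subgroup of elements of the class group of L killed by p has cardinality p^{2k} for some nonnegative integer k. -/
instance (ℓ : ℕ+) : FiniteDimensional ℚ (CyclotomicField ℓ ℚ) :=
  @IsCyclotomicExtension.finiteDimensional {(ℓ : ℕ)} ℚ _ (CyclotomicField ℓ ℚ) _ _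
    (CyclotomicField.algebra ℓ ℚ) _ inferInstance

instance (ℓ : ℕ+) (L : IntermediateField ℚ (CyclotomicField ℓ ℚ)) : NumberField L := ⟨⟩

/-!
Let `G` be the Galois group of `L/ℚ`, of order `3`. The norm of an ideal class is the class of an
ideal extended from `ℤ`, hence trivial. A class fixed by `G` has its cube as norm, so a fixed class
killed by `p ≠ 3` is trivial. Thus the `3`-group `G` acts on the `p`-torsion with exactly one fixed
point, and the order `p ^ n` of the torsion is `1` modulo `3`. As `p` has order `2` modulo `3`, the
exponent `n` is even.
-/

open scoped nonZeroDivisors Pointwise NumberField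

section PowTorsion

variable {G C : Type*} [Group G] [CommGroup C]

theorem eq_one_of_mem_fixedPoints_of_prod_smul_eq_one [Fintype G] [MulAction G C] {m : ℕ}
    (hm : (Nat.card G).Coprime m) {x : C} (hfix : x ∈ MulAction.fixedPoints G C)
    (hprod : ∏ g : G, g • x = 1) (hpow : x ^ m = 1) : x = 1 := by
  have hcard : x ^ Nat.card G = 1 := by
    rwa [Finset.prod_congr rfl fun g _ ↦ hfix g, Finset.prod_const, Finset.card_univ,
      ← Nat.card_eq_fintype_card] at hprod
  have hgcd := pow_gcd_eq_one.mpr ⟨hcard, hpow⟩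
  rwa [hm.gcd_eq_one, pow_one] at hgcd

theorem card_pow_eq_one_modEq_one_of_isPGroup [Fintype G] [MulDistribMulAction G C] [Finite C]
    {q m : ℕ} [Fact q.Prime] (hG : IsPGroup q G) (hm : q.Coprime m)
    (hprod : ∀ x : C, x ^ m = 1 → ∏ g : G, g • x = 1) :
    Nat.card {x : C // x ^ m = 1} ≡ 1 [MOD q] := by
  let T : SubMulAction G C :=
    { carrier := {x | x ^ m = 1}
      smul_mem' := fun g x (hx : x ^ m = 1) ↦
        show (g • x) ^ m = 1 by rw [← smul_pow', hx, smul_one] }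
  have hGm : (Nat.card G).Coprime m := by
    obtain ⟨n, hn⟩ := IsPGroup.iff_card.mp hG
    exact hn ▸ hm.pow_left n
  have hfix : MulAction.fixedPoints G T = {⟨1, one_pow m⟩} := by
    refine Set.eq_singleton_iff_unique_mem.mpr
      ⟨fun g ↦ Subtype.ext (smul_one g), fun x hx ↦ Subtype.ext ?_⟩
    exact eq_one_of_mem_fixedPoints_of_prod_smul_eq_one hGm (fun g ↦ congrArg Subtype.val (hx g))
      (hprod x x.2) x.2
  calc Nat.card T ≡ Nat.card (MulAction.fixedPoints G T) [MOD q] :=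
        hG.card_modEq_card_fixedPoints T
    _ = 1 := by rw [hfix, Nat.card_coe_set_eq, Set.ncard_singleton]

theorem exists_card_pow_eq_one_eq_prime_pow [Finite C] (p : ℕ) [Fact p.Prime] :
    ∃ n : ℕ, Nat.card {x : C // x ^ p = 1} = p ^ n := by
  have hker : IsPGroup p (powMonoidHom p : C →* C).ker := fun x ↦ ⟨1, Subtype.ext <| by
    rw [pow_one]; exact x.2⟩
  obtain ⟨n, hn⟩ := IsPGroup.iff_card.mp hker
  exact ⟨n, hn⟩

end PowTorsion

theorem orderOf_natCast_zmod_dvd_of_pow_modEq_one {a n q : ℕ} (h : a ^ n ≡ 1 [MOD q]) :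
    orderOf (a : ZMod q) ∣ n := by
  rw [orderOf_dvd_iff_pow_eq_one]
  exact_mod_cast (ZMod.natCast_eq_natCast_iff _ _ _).mpr h

theorem orderOf_natCast_zmod_three {p : ℕ} (hp : p % 3 = 2) : orderOf (p : ZMod 3) = 2 := by
  have hcast : (p : ZMod 3) = 2 := by
    rw [← ZMod.natCast_mod, hp, Nat.cast_ofNat]
  rw [hcast]
  exact orderOf_eq_prime (by decide) (by decide)

section IdealNorm

variable (A : Type*) {B : Type*} (G : Type*) [CommRing A] [CommRing B] [Algebra A B]
  [Module.Finite A B] [Module.IsTorsionFree A B] [Group G] [Fintype G] [MulSemiringAction G B]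

attribute [local instance] FractionRing.liftAlgebra in
theorem algebraMap_intNorm_eq_prod_smul [IsDomain A] [IsDomain B] [IsIntegrallyClosed A]
    [IsIntegrallyClosed B] [IsGaloisGroup G A B] (x : B) :
    algebraMap A B (Algebra.intNorm A B x) = ∏ g : G, g • x := by
  let := IsFractionRing.mulSemiringAction G B (FractionRing B)
  have : IsGalois (FractionRing A) (FractionRing B) := IsGaloisGroup.isGalois G _ _
  rw [Algebra.algebraMap_intNorm_of_isGalois,
    ← (IsGaloisGroup.mulEquivAlgEquiv G A B).toEquiv.prod_comp]
  rfl

variable [IsDedekindDomain A] [IsDedekindDomain B]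

theorem eq_top_of_relNorm_eq_top {I : Ideal B} (h : Ideal.relNorm A I = ⊤) : I = ⊤ := by
  have hcomap := Ideal.relNorm_le_comap A I
  rwa [h, top_le_iff, Ideal.comap_eq_top_iff] at hcomap

theorem relNorm_prod_smul [SMulCommClass G A B] (I : Ideal B) :
    Ideal.relNorm A (∏ g : G, g • I) = Ideal.relNorm A I ^ Nat.card G := by
  simp only [map_prod, Ideal.relNorm_smul, Finset.prod_const, Finset.card_univ,
    Nat.card_eq_fintype_card]

variable [IsGaloisGroup G A B]

theorem map_relNorm_le_prod_smul (I : Ideal B) :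
    (Ideal.relNorm A I).map (algebraMap A B) ≤ ∏ g : G, g • I := by
  rw [Ideal.map_relNorm, Ideal.span_le]
  rintro _ ⟨x, hx, rfl⟩
  rw [Function.comp_apply, algebraMap_intNorm_eq_prod_smul A G]
  exact Ideal.prod_mem_prod fun g _ ↦ Ideal.smul_mem_pointwise_smul g x I hx

-- The left side is a multiple of the right side, and both have the same relative norm.
theorem map_relNorm_eq_prod_smul (I : Ideal B) :
    (Ideal.relNorm A I).map (algebraMap A B) = ∏ g : G, g • I := by
  obtain ⟨J, hJ⟩ := Ideal.dvd_iff_le.mpr (map_relNorm_le_prod_smul A G I)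
  rcases eq_or_ne (Ideal.relNorm A I) 0 with hI | hI
  · obtain rfl : I = ⊥ := Ideal.relNorm_eq_bot_iff.mp hI
    rw [Ideal.relNorm_bot, Ideal.map_bot, ← Ideal.zero_eq_bot, eq_comm]
    exact Finset.prod_eq_zero (Finset.mem_univ 1) (smul_zero 1)
  have : SMulCommClass G A B := IsGaloisGroup.commutes
  have hnorm : Ideal.relNorm A I ^ Nat.card G =
      Ideal.relNorm A I ^ Nat.card G * Ideal.relNorm A J := by
    rw [← relNorm_prod_smul, ← map_mul, ← hJ, Ideal.relNorm_algebraMap, relNorm_prod_smul,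
      IsGaloisGroup.card_eq_finrank' G A B]
  have hJnorm : Ideal.relNorm A J = 1 := (mul_eq_left₀ (pow_ne_zero _ hI)).mp hnorm.symm
  have hJtop : J = ⊤ := eq_top_of_relNorm_eq_top A (hJnorm.trans Ideal.one_eq_top)
  rw [hJ, hJtop, Ideal.mul_top]

end IdealNorm

section ClassGroupAction

theorem ringEquivOfRingEquiv_coeIdeal {R S : Type*} [CommRing R] [CommRing S] [IsDomain R]
    [IsDomain S] (K L : Type*) [Field K] [Algebra R K] [IsFractionRing R K] [Field L] [Algebra S L]
    [IsFractionRing S L] (f : R ≃+* S) (I : Ideal R) :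
    FractionalIdeal.ringEquivOfRingEquiv K L f (I : FractionalIdeal R⁰ K) =
      (I.map f : Ideal S) := by
  refine FractionalIdeal.coeToSubmodule_injective (SetLike.ext fun y ↦ ?_)
  simp only [FractionalIdeal.ringEquivOfRingEquiv_apply, FractionalIdeal.val_eq_coe,
    FractionalIdeal.coe_coeIdeal, IsLocalization.coeSubmodule, FractionalIdeal.coe_mk,
    Submodule.mem_map, Algebra.linearMap_apply, exists_exists_and_eq_and, Ideal.mem_map_of_equiv]
  refine exists_congr fun a ↦ and_congr_right fun _ ↦ ?_
  rw [← IsFractionRing.semilinearEquivOfRingEquiv_algebraMap K L f a]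
  rfl

theorem classGroupMulEquiv_mk0 {R S : Type*} [CommRing R] [CommRing S] [IsDedekindDomain R]
    [IsDedekindDomain S] (f : R ≃+* S) (I : (Ideal R)⁰) (hI : (I : Ideal R).map f ∈ (Ideal S)⁰) :
    ClassGroup.mulEquiv f (ClassGroup.mk0 I) = ClassGroup.mk0 ⟨(I : Ideal R).map f, hI⟩ := by
  rw [ClassGroup.mulEquiv_apply, MulEquiv.symm_apply_eq, ClassGroup.equiv_mk0,
    ClassGroup.equiv_mk0]
  exact congrArg (QuotientGroup.mk' _)
    (Units.ext (ringEquivOfRingEquiv_coeIdeal (FractionRing R) (FractionRing S) f I))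

theorem smul_mem_nonZeroDivisors {G R : Type*} [Group G] [Semiring R] [MulSemiringAction G R]
    (g : G) {x : R} (hx : x ∈ R⁰) : g • x ∈ R⁰ :=
  MulEquivClass.map_nonZeroDivisors (MulSemiringAction.toRingEquiv G R g) ▸
    Submonoid.mem_map_of_mem _ hx

variable {G B : Type*} [Group G] [CommRing B] [MulSemiringAction G B]

/-- The action of `g` on ideal classes, as the automorphism of the class group induced by the ring
automorphism `g`; on the class of an integral ideal it is given by `smul_classGroup_mk0`. -/
noncomputable instance instSMulClassGroup [IsDomain B] : SMul G (ClassGroup B) where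
  smul g := ClassGroup.mulEquiv (MulSemiringAction.toRingEquiv G B g)

variable [IsDedekindDomain B]

theorem smul_classGroup_mk0 (g : G) (I : (Ideal B)⁰) :
    g • ClassGroup.mk0 I = ClassGroup.mk0 ⟨g • (I : Ideal B), smul_mem_nonZeroDivisors g I.2⟩ :=
  classGroupMulEquiv_mk0 (MulSemiringAction.toRingEquiv G B g) I (smul_mem_nonZeroDivisors g I.2)

/-- The class group of a Dedekind domain as a module over a group of ring automorphisms, written
multiplicatively. -/
noncomputable instance instMulDistribMulActionClassGroup :
    MulDistribMulAction G (ClassGroup B) where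
  one_smul x := by
    obtain ⟨I, rfl⟩ := ClassGroup.mk0_surjective x
    simp only [smul_classGroup_mk0, one_smul]
  mul_smul g h x := by
    obtain ⟨I, rfl⟩ := ClassGroup.mk0_surjective x
    simp only [smul_classGroup_mk0, mul_smul]
  smul_one g := map_one (ClassGroup.mulEquiv (MulSemiringAction.toRingEquiv G B g))
  smul_mul g := map_mul (ClassGroup.mulEquiv (MulSemiringAction.toRingEquiv G B g))

theorem exists_extendedHom_eq_prod_smul (A : Type*) [CommRing A] [IsDedekindDomain A] [Algebra A B]
    [Module.Finite A B] [Module.IsTorsionFree A B] [Fintype G] [IsGaloisGroup G A B]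
    (x : ClassGroup B) : ∃ y : ClassGroup A, ClassGroup.extendedHom A B y = ∏ g : G, g • x := by
  obtain ⟨I, rfl⟩ := ClassGroup.mk0_surjective x
  have hnorm : Ideal.relNorm A (I : Ideal B) ∈ (Ideal A)⁰ :=
    mem_nonZeroDivisors_of_ne_zero <|
      Ideal.relNorm_eq_bot_iff.not.mpr (nonZeroDivisors.coe_ne_zero I)
  refine ⟨ClassGroup.mk0 ⟨_, hnorm⟩, ?_⟩
  simp only [smul_classGroup_mk0, ClassGroup.extendedHom_mk0, ← map_prod]
  refine congrArg ClassGroup.mk0 (Subtype.ext ?_)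
  rw [Submonoid.coe_finsetProd]
  exact map_relNorm_eq_prod_smul A G (I : Ideal B)

theorem prod_smul_eq_one_of_pow_eq_one (A : Type*) [CommRing A] [IsDedekindDomain A] [Algebra A B]
    [Module.Finite A B] [Module.IsTorsionFree A B] [Fintype G] [IsGaloisGroup G A B] {m : ℕ}
    (hA : (Nat.card (ClassGroup A)).Coprime m) {x : ClassGroup B} (hx : x ^ m = 1) :
    ∏ g : G, g • x = 1 := by
  obtain ⟨y, hy⟩ := exists_extendedHom_eq_prod_smul (G := G) A x
  have hcard : (∏ g : G, g • x) ^ Nat.card (ClassGroup A) = 1 := by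
    rw [← hy, ← map_pow, pow_card_eq_one', map_one]
  have hpow : (∏ g : G, g • x) ^ m = 1 := by
    simp only [← Finset.prod_pow, ← smul_pow', hx, smul_one, Finset.prod_const_one]
  have hgcd := pow_gcd_eq_one.mpr ⟨hcard, hpow⟩
  rwa [hA.gcd_eq_one, pow_one] at hgcd

end ClassGroupAction

theorem p_rank_classGroup_even_general (A B G : Type*) [CommRing A] [IsDedekindDomain A]
    [CommRing B] [IsDedekindDomain B] [Finite (ClassGroup B)] [Algebra A B] [Module.Finite A B]
    [Module.IsTorsionFree A B] [Group G] [MulSemiringAction G B] [IsGaloisGroup G A B] {p q : ℕ}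
    (hp : p.Prime) (hq : q.Prime) (hpq : p ≠ q) (hG : IsPGroup q G)
    (hA : (Nat.card (ClassGroup A)).Coprime p) :
    ∃ k : ℕ, Nat.card {x : ClassGroup B // x ^ p = 1} = p ^ (orderOf (p : ZMod q) * k) := by
  have : Fact p.Prime := ⟨hp⟩
  have : Fact q.Prime := ⟨hq⟩
  have : Finite G := IsGaloisGroup.finite G A B
  have := Fintype.ofFinite G
  have hmod : Nat.card {x : ClassGroup B // x ^ p = 1} ≡ 1 [MOD q] :=
    card_pow_eq_one_modEq_one_of_isPGroup hG ((Nat.coprime_primes hq hp).mpr hpq.symm)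
      fun _ hx ↦ prod_smul_eq_one_of_pow_eq_one A hA hx
  obtain ⟨n, hn⟩ := exists_card_pow_eq_one_eq_prime_pow (C := ClassGroup B) p
  obtain ⟨k, rfl⟩ := orderOf_natCast_zmod_dvd_of_pow_modEq_one (hn ▸ hmod)
  exact ⟨k, hn⟩

theorem exists_card_classGroup_ringOfIntegers_pow_eq_one (K : Type*) [Field K] [NumberField K]
    [Algebra ℚ K] [IsGalois ℚ K] {p q n : ℕ} (hp : p.Prime) (hq : q.Prime) (hpq : p ≠ q)
    (hK : Module.finrank ℚ K = q ^ n) :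
    ∃ k : ℕ, Nat.card {x : ClassGroup (𝓞 K) // x ^ p = 1} = p ^ (orderOf (p : ZMod q) * k) := by
  have : IsGaloisGroup Gal(K/ℚ) ℤ (𝓞 K) := .of_isFractionRing Gal(K/ℚ) ℤ (𝓞 K) ℚ K
  have hG : IsPGroup q Gal(K/ℚ) := .of_card ((IsGalois.card_aut_eq_finrank ℚ K).trans hK)
  have hZ : (Nat.card (ClassGroup ℤ)).Coprime p := by
    rw [Nat.card_eq_fintype_card, card_classGroup_eq_one]
    exact Nat.coprime_one_left p
  exact p_rank_classGroup_even_general ℤ (𝓞 K) Gal(K/ℚ) hp hq hpq hG hZ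

-- Mathlib states this for `CyclotomicField.algebra n ℚ`, whereas `IntermediateField ℚ _` elaborates
-- with the algebra structure `DivisionRing.toRatAlgebra`.
theorem isAbelianGalois_rat_cyclotomicField (n : ℕ) [NeZero n] :
    IsAbelianGalois ℚ (CyclotomicField n ℚ) := by
  have h := @IsCyclotomicExtension.isAbelianGalois {n} ℚ (CyclotomicField n ℚ) _ _
    (CyclotomicField.algebra n ℚ) inferInstance
  rwa [Subsingleton.elim (CyclotomicField.algebra n ℚ) DivisionRing.toRatAlgebra] at h

/-- Let `ℓ` be a prime with `ℓ ≡ 1 (mod 3)` and let `L` be the unique degree-3 intermediate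
field of `ℚ(ζ_ℓ)/ℚ`.  If `p` is a prime with `p ≡ 2 (mod 3)`, then the `p`-rank of the
ideal class group of `L` is even: the subgroup of elements of the class group killed by `p`
has cardinality `p^(2k)` for some `k ≥ 0`. -/
theorem p_rank_classGroup_even (ℓ : ℕ+) (hℓ : (ℓ : ℕ).Prime) (hℓmod : (ℓ : ℕ) % 3 = 1)
    (L : IntermediateField ℚ (CyclotomicField ℓ ℚ)) (hL : Module.finrank ℚ L = 3)
    (p : ℕ) (hp : p.Prime) (hpmod : p % 3 = 2) :
    ∃ k : ℕ,
      Nat.card {x : ClassGroup (NumberField.RingOfIntegers L) // x ^ p = 1} = p ^ (2 * k) := by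
  have := isAbelianGalois_rat_cyclotomicField ℓ
  have hgal := (IsAbelianGalois.tower_bot ℚ L (CyclotomicField ℓ ℚ)).toIsGalois
  rw [← orderOf_natCast_zmod_three hpmod]
  exact exists_card_classGroup_ringOfIntegers_pow_eq_one L hp Nat.prime_three (by omega)
    (hL.trans (pow_one 3).symm)
end

section
/- Every nonzero simple module over the group algebra F_3[A_4], where A_4 is the alternating group on 4 letters and F_3 the field with 3 elements, is finite dimensional over F_3 of dimension either 1 or 3; moreover, every 1-dimensional simple F_3[A_4]-module is the trivial module (every group element acts as the identity). -/
/-!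
Let `V₄` be the Klein four subgroup of `A₄` and `M` a simple module in characteristic `3`.
Since `V₄` is an elementary abelian `2`-group, `M` contains a vector spanning a `V₄`-stable line,
and the translates of this line by the `3` cosets of `V₄` span `M`; hence `dim M ≤ 3`.

If `V₄` fixes a nonzero vector, then so does `A₄`, because `A₄ ⧸ V₄` is a `3`-group, and `M` is the
trivial module. Otherwise, as the nonidentity elements of `V₄` are conjugate in `A₄` and
`|V₄| = 1` in the base field, the sum of the character over `V₄` is both `dim M` and `0`, so `3`
divides `dim M`.
-/

open Module Representation
open scoped MonoidAlgebra

theorem exists_mem_fixedPoints_ne_zero_of_isPGroup {p : ℕ} [Fact p.Prime] {P A : Type*} [Group P]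
    [Finite P] (hP : IsPGroup p P) [AddCommGroup A] [Nontrivial A] [DistribMulAction P A]
    (hA : ∀ a : A, p • a = 0) : ∃ a ∈ MulAction.fixedPoints P A, a ≠ 0 := by
  obtain ⟨a, ha⟩ := exists_ne (0 : A)
  let S : AddSubgroup A := .closure (Set.range fun g : P ↦ g • a)
  have hS (g : P) : S ≤ S.comap (DistribSMul.toAddMonoidHom A g) := by
    rw [AddSubgroup.closure_le]
    rintro _ ⟨h, rfl⟩
    exact AddSubgroup.subset_closure ⟨g * h, mul_smul g h a⟩
  let S' : SubMulAction P A := { carrier := S, smul_mem' := fun g _ hx ↦ hS g hx }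
  have : Finite S' :=
    have : IsAddTorsion S := fun x ↦ isOfFinAddOrder_iff_nsmul_eq_zero.mpr
      ⟨p, Fact.out (p := p.Prime) |>.pos, Subtype.ext (hA x)⟩
    AddCommGroup.finite_of_fg_isAddTorsion S this
  have hpS : p ∣ Nat.card S' := by
    rw [← addOrderOf_eq_prime (hA a) ha]
    exact S.addOrderOf_dvd_natCard (AddSubgroup.subset_closure ⟨1, one_smul P a⟩)
  obtain ⟨b, hb, hb0⟩ := hP.exists_fixed_point_of_prime_dvd_card_of_fixed_point S' hpS
    (a := ⟨0, S.zero_mem⟩) fun g ↦ Subtype.ext (smul_zero g)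
  exact ⟨b, fun g ↦ congrArg Subtype.val (hb g), fun h ↦ hb0 (Subtype.ext h.symm)⟩

section Invariants

variable {k G V : Type*} [CommRing k] [Group G] [AddCommGroup V] [Module k V]
  (ρ : Representation k G V)

theorem invariants_ne_bot_of_isPGroup {p : ℕ} [Fact p.Prime] [CharP k p] [Finite G]
    (hG : IsPGroup p G) [Nontrivial V] : ρ.invariants ≠ ⊥ := by
  let : DistribMulAction G V := .compHom V ρ
  have hV (v : V) : p • v = 0 := by
    rw [← Nat.cast_smul_eq_nsmul k, CharP.cast_eq_zero, zero_smul]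
  obtain ⟨v, hv, hv0⟩ := exists_mem_fixedPoints_ne_zero_of_isPGroup hG hV
  exact ρ.invariants.ne_bot_iff.mpr ⟨v, hv, hv0⟩

theorem invariants_ne_bot_of_isPGroup_quotient {p : ℕ} [Fact p.Prime] [CharP k p]
    {N : Subgroup G} [N.Normal] [N.FiniteIndex] (hN : IsPGroup p (G ⧸ N))
    (h : invariants (ρ.comp N.subtype) ≠ ⊥) : ρ.invariants ≠ ⊥ := by
  have := Submodule.nontrivial_iff_ne_bot.mpr h
  obtain ⟨v, hv, hv0⟩ := Submodule.exists_mem_ne_zero_of_ne_bot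
    (invariants_ne_bot_of_isPGroup (ρ.quotientToInvariants N) hN)
  exact ρ.invariants.ne_bot_iff.mpr
    ⟨v, fun g ↦ congrArg Subtype.val (hv g), by simpa using hv0⟩

theorem exists_ne_zero_forall_apply_eq_or_eq_neg [Finite G] (hG : Monoid.exponent G = 2)
    [Nontrivial V] : ∃ v ≠ 0, ∀ g, ρ g v = v ∨ ρ g v = -v := by
  classical
  suffices h : ∀ s : Finset G, ∃ v ≠ 0, ∀ g ∈ s, ρ g v = v ∨ ρ g v = -v by
    simpa using h (Set.finite_univ (α := G)).toFinset
  intro s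
  induction s using Finset.induction_on with
  | empty => simpa using exists_ne (0 : V)
  | insert a s _ ih =>
    obtain ⟨v, hv0, hv⟩ := ih
    simp only [Finset.forall_mem_insert]
    by_cases hav : ρ a v + v = 0
    · exact ⟨v, hv0, .inr (eq_neg_of_add_eq_zero_left hav), hv⟩
    have haa : ρ a (ρ a v) = v := by
      rw [← Module.End.mul_apply, ← map_mul, ← sq, ← hG, Monoid.pow_exponent_eq_one, map_one,
        Module.End.one_apply]
    have hga (g : G) : ρ g (ρ a v) = ρ a (ρ g v) := by
      simp only [← Module.End.mul_apply, ← map_mul, mul_comm_of_exponent_two hG]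
    refine ⟨ρ a v + v, hav, .inl (by rw [map_add, haa, add_comm]), fun g hg ↦ ?_⟩
    exact (hv g hg).imp (fun h ↦ by rw [map_add, hga, h])
      fun h ↦ by rw [map_add, hga, h, map_neg, neg_add]

end Invariants

theorem finrank_eq_finrank_invariants_of_forall_isConj {k G V : Type*} [Field k] [Group G]
    [AddCommGroup V] [Module k V] [FiniteDimensional k V] (ρ : Representation k G V)
    {N : Subgroup G} [Finite N] (hN : (Nat.card N : k) = 1)
    (hconj : ∀ a ∈ N, ∀ b ∈ N, a ≠ 1 → b ≠ 1 → IsConj a b) :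
    (finrank k V : k) = finrank k (invariants (ρ.comp N.subtype)) := by
  classical
  have := Fintype.ofFinite N
  let : Invertible (Nat.card N : k) := invertibleOfNonzero (hN ▸ one_ne_zero)
  let χ : N → k := character (ρ.comp N.subtype)
  have hχ {a b : N} (ha : a ≠ 1) (hb : b ≠ 1) : χ a = χ b := by
    obtain ⟨c, hc⟩ := isConj_iff.mp (hconj b b.2 a a.2 (by simpa using hb) (by simpa using ha))
    change ρ.character a = ρ.character b
    rw [← hc, char_conj]
  have hcard : ((Finset.univ.erase (1 : N)).card : k) = 0 := by
    rw [Finset.cast_card_erase_of_mem (Finset.mem_univ 1), Finset.card_univ,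
      Fintype.card_eq_nat_card, hN, sub_self]
  have hsum : ∑ n ∈ Finset.univ.erase (1 : N), χ n = 0 := by
    obtain hempty | ⟨a, ha⟩ := (Finset.univ.erase (1 : N)).eq_empty_or_nonempty
    · rw [hempty, Finset.sum_empty]
    · rw [Finset.sum_congr rfl fun n hn ↦ hχ (Finset.ne_of_mem_erase hn)
        (Finset.ne_of_mem_erase ha), Finset.sum_const, nsmul_eq_mul, hcard, zero_mul]
  calc (finrank k V : k) = χ 1 + ∑ n ∈ Finset.univ.erase (1 : N), χ n := by
        rw [hsum, add_zero]
        exact (char_one (ρ.comp N.subtype)).symm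
    _ = (Nat.card N : k)⁻¹ * ∑ n, χ n := by
        rw [Finset.add_sum_erase _ _ (Finset.mem_univ 1), hN, inv_one, one_mul]
    _ = finrank k (invariants (ρ.comp N.subtype)) := card_inv_mul_sum_char_eq_finrank _

section Irreducible

variable {k G V : Type*} [Field k] [AddCommGroup V] [Module k V]

section Monoid

variable [Monoid G] (ρ : Representation k G V) [IsIrreducible ρ]

include ρ in
theorem nontrivial_of_isIrreducible : Nontrivial V :=
  IsSimpleModule.nontrivial k[G] ρ.asModule

theorem eq_top_of_isIrreducible {W : Submodule k V} (hW : W ≠ ⊥) (hρ : ∀ g, W ≤ W.comap (ρ g)) :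
    W = ⊤ := by
  let σ : Subrepresentation ρ := ⟨W, hρ⟩
  exact congrArg Subrepresentation.toSubmodule <|
    (eq_bot_or_eq_top σ).resolve_left fun h ↦ hW (congrArg Subrepresentation.toSubmodule h)

end Monoid

variable [Group G] (ρ : Representation k G V) [IsIrreducible ρ]

theorem span_range_quotient_out_eq_top {H : Subgroup G} {v : V} (hv : v ≠ 0)
    (hH : ∀ h ∈ H, ρ h v ∈ Submodule.span k {v}) :
    Submodule.span k (Set.range fun q : G ⧸ H ↦ ρ q.out v) = ⊤ := by
  set W := Submodule.span k (Set.range fun q : G ⧸ H ↦ ρ q.out v)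
  have hmem (g : G) : ρ g v ∈ W := by
    obtain ⟨h, hh⟩ := QuotientGroup.mk_out_eq_mul H g
    obtain ⟨c, hc⟩ := Submodule.mem_span_singleton.mp (hH _ (inv_mem h.2))
    have hg : ρ g v = c • ρ (g : G ⧸ H).out v := by
      rw [hh, ← map_smul, hc, ← Module.End.mul_apply, ← map_mul, mul_inv_cancel_right]
    exact hg ▸ W.smul_mem c (Submodule.subset_span ⟨g, rfl⟩)
  refine eq_top_of_isIrreducible ρ (W.ne_bot_iff.mpr ⟨v, by simpa using hmem 1, hv⟩) fun g ↦ ?_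
  rw [Submodule.span_le]
  rintro _ ⟨q, rfl⟩
  simpa using hmem (g * q.out)

theorem finite_and_finrank_le_index_of_isIrreducible {H : Subgroup G} [H.FiniteIndex] {v : V}
    (hv : v ≠ 0) (hH : ∀ h ∈ H, ρ h v ∈ Submodule.span k {v}) :
    Module.Finite k V ∧ finrank k V ≤ H.index := by
  have := Fintype.ofFinite (G ⧸ H)
  have htop := span_range_quotient_out_eq_top ρ hv hH
  refine ⟨⟨htop ▸ Submodule.fg_span (Set.finite_range _)⟩, ?_⟩
  rw [← finrank_top, ← htop, Subgroup.index, Nat.card_eq_fintype_card]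
  exact finrank_range_le_card _

theorem isTrivial_of_invariants_ne_bot (h : ρ.invariants ≠ ⊥) : ρ.IsTrivial := by
  have htop : ρ.invariants = ⊤ := eq_top_of_isIrreducible ρ h fun g v hv ↦ by
    rwa [Submodule.mem_comap, hv g]
  exact ⟨fun g ↦ LinearMap.ext fun v ↦ (htop ▸ Submodule.mem_top : v ∈ ρ.invariants) g⟩

theorem finrank_eq_one_of_isTrivial [ρ.IsTrivial] : finrank k V = 1 := by
  have := nontrivial_of_isIrreducible ρ
  obtain ⟨v, hv⟩ := exists_ne (0 : V)
  obtain ⟨_, hle⟩ := finite_and_finrank_le_index_of_isIrreducible ρ (H := ⊤) hv fun h _ ↦ by simp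
  exact le_antisymm (by simpa using hle) finrank_pos

end Irreducible

theorem isIrreducible_ofModule' (k G M : Type*) [Field k] [Monoid G] [AddCommGroup M] [Module k M]
    [Module k[G] M] [IsScalarTower k k[G] M] [IsSimpleModule k[G] M] :
    IsIrreducible (ofModule' (k := k) (G := G) M) := by
  let ρ : Representation k G M := ofModule' M
  have hρ : ρ.asAlgebraHom = Algebra.lsmul k k M := (MonoidAlgebra.lift k _ G).apply_symm_apply _
  let e : ρ.asModule ≃ₗ[k[G]] M :=
    { ρ.asModuleEquiv with map_smul' := fun r m ↦ LinearMap.congr_fun (AlgHom.congr_fun hρ r) m }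
  exact ρ.irreducible_iff_isSimpleModule_asModule.mpr (.congr e)

section AlternatingGroup

open alternatingGroup

theorem index_kleinFour {α : Type*} [Fintype α] [DecidableEq α] (hα : Nat.card α = 4) :
    (kleinFour α).index = 3 := by
  have h := (kleinFour α).index_mul_card
  rw [kleinFour_card_of_card_eq_four hα, card_of_card_eq_four hα] at h
  lia

set_option maxRecDepth 100000 in
theorem isConj_of_mul_self_eq_one_of_alternatingGroup_four : ∀ a b : alternatingGroup (Fin 4),
    a * a = 1 → b * b = 1 → a ≠ 1 → b ≠ 1 → IsConj a b := by
  decide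

theorem isConj_of_mem_kleinFour {a b : alternatingGroup (Fin 4)} (ha : a ∈ kleinFour (Fin 4))
    (hb : b ∈ kleinFour (Fin 4)) (ha1 : a ≠ 1) (hb1 : b ≠ 1) : IsConj a b := by
  have := kleinFour_isKleinFour (α := Fin 4) (by simp)
  have hsq {c} (hc : c ∈ kleinFour (Fin 4)) : c * c = 1 :=
    congrArg Subtype.val (IsKleinFour.mul_self (⟨c, hc⟩ : kleinFour (Fin 4)))
  exact isConj_of_mul_self_eq_one_of_alternatingGroup_four a b (hsq ha) (hsq hb) ha1 hb1

variable {k V : Type*} [Field k] [AddCommGroup V] [Module k V]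
  (ρ : Representation k (alternatingGroup (Fin 4)) V) [IsIrreducible ρ]

include ρ in
theorem finite_and_finrank_le_three_of_alternatingGroup_four :
    Module.Finite k V ∧ finrank k V ≤ 3 := by
  have := nontrivial_of_isIrreducible ρ
  obtain ⟨v, hv, hsign⟩ := exists_ne_zero_forall_apply_eq_or_eq_neg
    (ρ.comp (kleinFour (Fin 4)).subtype) (exponent_kleinFour_of_card_eq_four (by simp))
  rw [← index_kleinFour (α := Fin 4) (by simp)]
  refine finite_and_finrank_le_index_of_isIrreducible ρ hv fun h hh ↦
    Submodule.mem_span_singleton.mpr ?_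
  exact (hsign ⟨h, hh⟩).elim (fun h ↦ ⟨1, by simpa using h.symm⟩)
    fun h ↦ ⟨-1, by simpa using h.symm⟩

theorem isTrivial_or_finrank_eq_three_of_alternatingGroup_four [CharP k 3] :
    ρ.IsTrivial ∨ finrank k V = 3 := by
  have := nontrivial_of_isIrreducible ρ
  obtain ⟨_, hle⟩ := finite_and_finrank_le_three_of_alternatingGroup_four ρ
  have hindex : (kleinFour (Fin 4)).index = 3 := index_kleinFour (by simp)
  by_cases hinv : invariants (ρ.comp (kleinFour (Fin 4)).subtype) = ⊥
  · have hcard : (Nat.card (kleinFour (Fin 4)) : k) = 1 := by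
      rw [kleinFour_card_of_card_eq_four (by simp)]
      linear_combination CharP.cast_eq_zero k 3
    have hdim : (finrank k V : k) = 0 := by
      rw [finrank_eq_finrank_invariants_of_forall_isConj ρ hcard
        fun a ha b hb ↦ isConj_of_mem_kleinFour ha hb, hinv, finrank_bot, Nat.cast_zero]
    have hdvd : 3 ∣ finrank k V := (CharP.cast_eq_zero_iff k 3 _).mp hdim
    exact .inr <| le_antisymm hle <| Nat.le_of_dvd finrank_pos hdvd
  · have := normal_kleinFour (α := Fin 4) (by simp)
    have hquot : IsPGroup 3 (alternatingGroup (Fin 4) ⧸ kleinFour (Fin 4)) :=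
      .of_card (n := 1) hindex
    exact .inl <| isTrivial_of_invariants_ne_bot ρ <|
      invariants_ne_bot_of_isPGroup_quotient ρ hquot hinv

end AlternatingGroup

theorem simple_modules_of_F3_A4_general (k M : Type*) [Field k] [CharP k 3] [AddCommGroup M]
    [Module k M] [Module k[alternatingGroup (Fin 4)] M]
    [IsScalarTower k k[alternatingGroup (Fin 4)] M]
    [IsSimpleModule k[alternatingGroup (Fin 4)] M] :
    Module.Finite k M ∧ (finrank k M = 1 ∨ finrank k M = 3) ∧
    (finrank k M = 1 → ∀ (g : alternatingGroup (Fin 4)) (m : M),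
      MonoidAlgebra.of k (alternatingGroup (Fin 4)) g • m = m) := by
  let ρ : Representation k (alternatingGroup (Fin 4)) M := ofModule' M
  have : IsIrreducible ρ := isIrreducible_ofModule' k _ M
  refine ⟨(finite_and_finrank_le_three_of_alternatingGroup_four ρ).1, ?_⟩
  obtain htriv | hthree := isTrivial_or_finrank_eq_three_of_alternatingGroup_four ρ
  · exact ⟨.inl (finrank_eq_one_of_isTrivial ρ), fun _ g m ↦ ρ.isTrivial_apply g m⟩
  · exact ⟨.inr hthree, fun hone ↦ by lia⟩

/-- Every simple module over the group algebra `𝔽₃[A₄]` is finite dimensional over `𝔽₃` of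
dimension `1` or `3`, and every `1`-dimensional simple module is the trivial module:
every group element acts as the identity. -/
theorem simple_modules_of_F3_A4 (M : Type) [AddCommGroup M]
    [Module (ZMod 3) M]
    [Module (MonoidAlgebra (ZMod 3) (alternatingGroup (Fin 4))) M]
    [IsScalarTower (ZMod 3) (MonoidAlgebra (ZMod 3) (alternatingGroup (Fin 4))) M]
    [IsSimpleModule (MonoidAlgebra (ZMod 3) (alternatingGroup (Fin 4))) M] :
    Module.Finite (ZMod 3) M ∧
    (Module.finrank (ZMod 3) M = 1 ∨ Module.finrank (ZMod 3) M = 3) ∧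
    (Module.finrank (ZMod 3) M = 1 →
      ∀ (g : alternatingGroup (Fin 4)) (m : M),
        MonoidAlgebra.of (ZMod 3) (alternatingGroup (Fin 4)) g • m = m) :=
  simple_modules_of_F3_A4_general (ZMod 3) M
end

section
/- The groups SL(2, ℤ/9ℤ) and SL(2, F_3[ε]) are isomorphic as groups, where F_3[ε] = F_3[X]/(X^2) is the ring of dual numbers over the field with 3 elements. -/
/-!
Both groups are split extensions of `SL(2, 𝔽₃)` by the additive group `sl(2, 𝔽₃)`. In each case
the kernel consists of the matrices `1 + tB`, with `t = 3` or `t = ε`, and `t² = 0` turns the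
determinant condition into `tr B = 0` and conjugation into the adjoint action of `SL(2, 𝔽₃)`.

Constant matrices split the extension over `𝔽₃[ε]`. Over `ℤ/9`, a complement of the kernel is the
normalizer of a quaternion group `Q₈`: it maps onto `SL(2, 𝔽₃)` because the Hurwitz units
`(±1 ± i ± j ± k) / 2` normalize `Q₈`, and it meets the kernel trivially because a kernel element
normalizing `Q₈` centralizes it, hence is a scalar matrix.
-/

section SplitExtensions

variable {G G' : Type*} [Group G] [Group G']

theorem nonempty_mulEquiv_of_conjAct_eq {N E E' : Type*} [Group N] [Group E] [Group E']
    {S : GroupExtension N E G} {S' : GroupExtension N E' G} (s : S.Splitting) (s' : S'.Splitting)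
    (h : s.conjAct = s'.conjAct) : Nonempty (E ≃* E') :=
  ⟨s.semidirectProductMulEquiv.symm.trans (h ▸ s'.semidirectProductMulEquiv)⟩

theorem exists_rightInverse_of_disjoint_ker_of_map_eq_top {f : G →* G'} {H : Subgroup G}
    (hker : Disjoint H f.ker) (hmap : H.map f = ⊤) :
    ∃ s : G' →* G, Function.RightInverse s f := by
  have hinj : Function.Injective (f.domRestrict H) := by
    rw [injective_iff_map_eq_one]
    exact fun x hx ↦ Subtype.ext (Subgroup.disjoint_def.mp hker x.2 hx)
  have hsurj : Function.Surjective (f.domRestrict H) := by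
    intro y
    obtain ⟨x, hx, rfl⟩ := hmap.ge (Subgroup.mem_top y)
    exact ⟨⟨x, hx⟩, rfl⟩
  let e := MulEquiv.ofBijective (f.domRestrict H) ⟨hinj, hsurj⟩
  exact ⟨H.subtype.comp e.symm, e.apply_symm_apply⟩

theorem normalizer_inf_ker_le_centralizer {f : G →* G'} {Q : Set G} (hf : Q.InjOn f) :
    Subgroup.normalizer Q ⊓ f.ker ≤ Subgroup.centralizer Q := by
  rintro g ⟨hgQ, hgf⟩ q hq
  have hfg : f g = 1 := hgf
  have hconj : g * q * g⁻¹ = q := hf ((hgQ q).mp hq) hq (by simp [hfg])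
  exact (mul_inv_eq_iff_eq_mul.mp hconj).symm

end SplitExtensions

/-- A surjection `R → k` whose kernel is a copy of `k`, with `R` acting on it through `k`: a short
exact sequence `0 → k → R → k → 0` of `R`-modules. The kernel automatically squares to zero. -/
structure FirstOrderThickening (R k : Type*) [CommRing R] [CommRing k] where
  proj : R →+* k
  incl : k →+ R
  proj_surjective : Function.Surjective proj
  incl_injective : Function.Injective incl
  exact_incl_proj : Function.Exact incl proj
  mul_incl : ∀ x y, x * incl y = incl (proj x * y)

namespace FirstOrderThickening

open Matrix LieAlgebra.SpecialLinear

section CongruenceKernel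

variable {n R k : Type*} [Fintype n] [CommRing R] [CommRing k]
  (T : FirstOrderThickening R k)

theorem incl_mul_incl (x y : k) : T.incl x * T.incl y = 0 := by
  rw [T.mul_incl, T.exact_incl_proj.apply_apply_eq_zero, zero_mul, map_zero]

theorem incl_proj (x : R) : T.incl (T.proj x) = T.incl 1 * x := by
  rw [mul_comm, T.mul_incl, mul_one]

theorem mul_map_incl (A : Matrix n n R) (B : Matrix n n k) :
    A * B.map T.incl = (A.map T.proj * B).map T.incl := by
  ext i j
  simp only [mul_apply, map_apply, T.mul_incl, map_sum]

theorem map_incl_mul (B : Matrix n n k) (A : Matrix n n R) :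
    B.map T.incl * A = (B * A.map T.proj).map T.incl := by
  ext i j
  simp only [mul_apply, map_apply, mul_comm (T.incl _), T.mul_incl, map_sum, mul_comm (T.proj _)]

theorem map_incl_mul_map_incl (B C : Matrix n n k) : B.map T.incl * C.map T.incl = 0 := by
  ext i j
  simp only [mul_apply, map_apply, T.incl_mul_incl, Finset.sum_const_zero, Matrix.zero_apply]

variable [DecidableEq n]

theorem mapMatrix_proj_map_incl (B : Matrix n n k) : T.proj.mapMatrix (B.map T.incl) = 0 := by
  ext i j
  exact T.exact_incl_proj.apply_apply_eq_zero (B i j)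

theorem det_one_add_map_incl (B : Matrix n n k) :
    (1 + B.map T.incl).det = 1 + T.incl B.trace := by
  choose lift hlift using T.proj_surjective
  have hsmul : B.map T.incl = T.incl 1 • B.map lift := by
    ext i j
    simp only [map_apply, Matrix.smul_apply, smul_eq_mul, ← T.incl_proj, hlift]
  have htrace : T.incl B.trace = (B.map lift).trace * T.incl 1 := by
    rw [AddMonoidHom.map_trace, hsmul, trace_smul, smul_eq_mul, mul_comm]
  rw [hsmul, det_one_add_smul, pow_two, T.incl_mul_incl, mul_zero, add_zero, htrace]

theorem exists_eq_one_add_map_incl {M : Matrix n n R} (hM : T.proj.mapMatrix M = 1) :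
    ∃ B : Matrix n n k, M = 1 + B.map T.incl := by
  have hsub : T.proj.mapMatrix (M - 1) = 0 := by rw [map_sub, hM, map_one, sub_self]
  choose B hB using fun i j ↦ (T.exact_incl_proj _).mp (congr_fun₂ hsub i j)
  refine ⟨of B, eq_add_of_sub_eq' ?_⟩
  ext i j
  exact (hB i j).symm

/-- The isomorphism of `sl n k` with the congruence kernel of `SL(n, R) → SL(n, k)`, sending `B` to
`1 + B`, as a homomorphism into `SL(n, R)`. -/
def congruenceInl : Multiplicative (sl n k) →* SpecialLinearGroup n R :=
  MonoidHom.mk'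
    (fun B ↦ ⟨1 + B.toAdd.1.map T.incl, by
      rw [T.det_one_add_map_incl, show B.toAdd.1.trace = 0 from B.toAdd.2, map_zero, add_zero]⟩)
    fun B C ↦ Subtype.ext <| by
      change 1 + (B.toAdd.1 + C.toAdd.1).map T.incl =
        (1 + B.toAdd.1.map T.incl) * (1 + C.toAdd.1.map T.incl)
      rw [mul_add, mul_one, add_mul, one_mul, T.map_incl_mul_map_incl, add_zero,
        Matrix.map_add _ (map_add T.incl), add_assoc]

theorem coe_congruenceInl (B : Multiplicative (sl n k)) :
    (T.congruenceInl B : Matrix n n R) = 1 + B.toAdd.1.map T.incl := rfl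

theorem congruenceInl_injective :
    Function.Injective (T.congruenceInl : Multiplicative (sl n k) → SpecialLinearGroup n R) := by
  intro B C h
  have hBC := congrArg Subtype.val h
  rw [coe_congruenceInl, coe_congruenceInl, add_right_inj] at hBC
  exact Subtype.ext (Matrix.map_injective T.incl_injective hBC)

theorem range_congruenceInl :
    (T.congruenceInl : Multiplicative (sl n k) →* SpecialLinearGroup n R).range =
      (SpecialLinearGroup.map T.proj).ker := by
  ext M
  constructor
  · rintro ⟨B, rfl⟩
    apply Subtype.ext
    change T.proj.mapMatrix (1 + B.toAdd.1.map T.incl) = 1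
    rw [map_add, map_one, T.mapMatrix_proj_map_incl, add_zero]
  · intro hM
    obtain ⟨B, hB⟩ := T.exists_eq_one_add_map_incl (congrArg Subtype.val hM)
    have htrace : T.incl B.trace = 0 := by
      rw [← add_eq_left, ← T.det_one_add_map_incl, ← hB, M.det_coe]
    have hB_mem : B ∈ sl n k := (map_eq_zero_iff _ T.incl_injective).mp htrace
    exact ⟨.ofAdd ⟨B, hB_mem⟩, Subtype.ext hB.symm⟩

/-- The extension `1 → sl n k → SL(n, R) → SL(n, k) → 1`. -/
def congruenceExtension (h : Function.Surjective (SpecialLinearGroup.map (n := n) T.proj)) :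
    GroupExtension (Multiplicative (sl n k)) (SpecialLinearGroup n R) (SpecialLinearGroup n k) where
  inl := T.congruenceInl
  rightHom := SpecialLinearGroup.map T.proj
  inl_injective := T.congruenceInl_injective
  range_inl_eq_ker_rightHom := T.range_congruenceInl
  rightHom_surjective := h

theorem coe_conj_congruenceInl (g : SpecialLinearGroup n R) (B : Multiplicative (sl n k)) :
    ((g * T.congruenceInl B * g⁻¹ : SpecialLinearGroup n R) : Matrix n n R) =
      1 + ((SpecialLinearGroup.map T.proj g : Matrix n n k) * B.toAdd.1 *
        ((SpecialLinearGroup.map T.proj g)⁻¹ : SpecialLinearGroup n k)).map T.incl := by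
  rw [← map_inv, Matrix.SpecialLinearGroup.coe_mul, Matrix.SpecialLinearGroup.coe_mul,
    coe_congruenceInl, mul_add, mul_one, add_mul,
    ← Matrix.SpecialLinearGroup.coe_mul, mul_inv_cancel, Matrix.SpecialLinearGroup.coe_one,
    T.mul_map_incl, T.map_incl_mul]
  rfl

theorem coe_conjAct_congruenceExtension
    (h : Function.Surjective (SpecialLinearGroup.map (n := n) T.proj))
    (g : SpecialLinearGroup n R) (B : Multiplicative (sl n k)) :
    ((T.congruenceExtension h).conjAct g B).toAdd.1 =
      (SpecialLinearGroup.map T.proj g : Matrix n n k) * B.toAdd.1 *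
        ((SpecialLinearGroup.map T.proj g)⁻¹ : SpecialLinearGroup n k) := by
  have hconj := congrArg Subtype.val
    ((T.congruenceExtension h).inl_conjAct_comm (e := g) (n := B))
  exact Matrix.map_injective T.incl_injective <| add_left_cancel <|
    hconj.trans (T.coe_conj_congruenceInl g B)

theorem nonempty_specialLinearGroup_mulEquiv {R' : Type*} [CommRing R']
    (T' : FirstOrderThickening R' k)
    {s : SpecialLinearGroup n k →* SpecialLinearGroup n R}
    {s' : SpecialLinearGroup n k →* SpecialLinearGroup n R'}
    (hs : Function.RightInverse s (SpecialLinearGroup.map T.proj))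
    (hs' : Function.RightInverse s' (SpecialLinearGroup.map T'.proj)) :
    Nonempty (SpecialLinearGroup n R ≃* SpecialLinearGroup n R') := by
  let σ : (T.congruenceExtension hs.surjective).Splitting := ⟨s, hs⟩
  let σ' : (T'.congruenceExtension hs'.surjective).Splitting := ⟨s', hs'⟩
  refine nonempty_mulEquiv_of_conjAct_eq σ σ' ?_
  ext g B : 3
  apply Subtype.ext
  have h1 := T.coe_conjAct_congruenceExtension hs.surjective (s g) B
  have h2 := T'.coe_conjAct_congruenceExtension hs'.surjective (s' g) B
  rw [hs g] at h1
  rw [hs' g] at h2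
  exact h1.trans h2.symm

end CongruenceKernel

/-- The dual numbers over `k`, with kernel `kε`. -/
def dualNumber (k : Type*) [CommRing k] : FirstOrderThickening (DualNumber k) k where
  proj := TrivSqZeroExt.fstHom k k k
  incl := TrivSqZeroExt.inrHom k k
  proj_surjective := TrivSqZeroExt.fst_surjective
  incl_injective := TrivSqZeroExt.inr_injective
  exact_incl_proj x :=
    ⟨fun hx ↦ ⟨x.snd, TrivSqZeroExt.ext hx.symm rfl⟩, by rintro ⟨y, rfl⟩; rfl⟩
  mul_incl x y := by ext <;> simp [mul_comm]

theorem rightInverse_map_inlHom {n : Type*} [Fintype n] [DecidableEq n] (k : Type*) [CommRing k] :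
    Function.RightInverse (SpecialLinearGroup.map (n := n) (TrivSqZeroExt.inlHom k k))
      (SpecialLinearGroup.map (dualNumber k).proj) := by
  intro g
  ext
  rfl

section ZModSq

variable (m : ℕ)

/-- Multiplication by `m`, as a map `ℤ/m → ℤ/m²`. -/
def zmodSqIncl : ZMod m →+ ZMod (m ^ 2) :=
  ZMod.lift m ⟨(AddMonoidHom.mulLeft (m : ZMod (m ^ 2))).comp (Int.castAddHom _), by
    simp [← pow_two, ← Nat.cast_pow]⟩

theorem zmodSqIncl_intCast (a : ℤ) : zmodSqIncl m a = m * a :=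
  ZMod.lift_coe ..

theorem zmodSqIncl_injective [NeZero m] : Function.Injective (zmodSqIncl m) := by
  rw [injective_iff_map_eq_zero]
  intro x hx
  obtain ⟨a, rfl⟩ := ZMod.intCast_surjective x
  rw [zmodSqIncl_intCast, ← Int.cast_natCast, ← Int.cast_mul,
    ZMod.intCast_zmod_eq_zero_iff_dvd, Nat.cast_pow, pow_two] at hx
  exact (ZMod.intCast_zmod_eq_zero_iff_dvd a m).mpr
    (Int.dvd_of_mul_dvd_mul_left (Nat.cast_ne_zero.mpr (NeZero.ne m)) hx)

theorem exact_zmodSqIncl_castHom :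
    Function.Exact (zmodSqIncl m) (ZMod.castHom (dvd_pow_self m two_ne_zero) (ZMod m)) := by
  intro x
  constructor
  · intro hx
    obtain ⟨a, rfl⟩ := ZMod.intCast_surjective x
    rw [map_intCast, ZMod.intCast_zmod_eq_zero_iff_dvd] at hx
    obtain ⟨b, rfl⟩ := hx
    exact ⟨b, by rw [zmodSqIncl_intCast, Int.cast_mul, Int.cast_natCast]⟩
  · rintro ⟨y, rfl⟩
    obtain ⟨b, rfl⟩ := ZMod.intCast_surjective y
    rw [zmodSqIncl_intCast, map_mul, map_natCast, ZMod.natCast_self, zero_mul]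

/-- The ring `ℤ/m²` as a thickening of `ℤ/m`, with kernel `mℤ/m²`. -/
def zmodSq [NeZero m] : FirstOrderThickening (ZMod (m ^ 2)) (ZMod m) where
  proj := ZMod.castHom (dvd_pow_self m two_ne_zero) (ZMod m)
  incl := zmodSqIncl m
  proj_surjective := ZMod.castHom_surjective _
  incl_injective := zmodSqIncl_injective m
  exact_incl_proj := exact_zmodSqIncl_castHom m
  mul_incl x y := by
    obtain ⟨a, rfl⟩ := ZMod.intCast_surjective x
    obtain ⟨b, rfl⟩ := ZMod.intCast_surjective y
    rw [map_intCast (ZMod.castHom (dvd_pow_self m two_ne_zero) (ZMod m)), ← Int.cast_mul,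
      zmodSqIncl_intCast, zmodSqIncl_intCast, Int.cast_mul, mul_left_comm]

end ZModSq

end FirstOrderThickening

section QuaternionGroup

open Matrix SpecialLinearGroup
open scoped MatrixGroups

theorem eq_top_of_transvection_one_mem {p : ℕ} [Fact p.Prime] {H : Subgroup SL(2, ZMod p)}
    (hupper : transvection zero_ne_one 1 ∈ H) (hlower : transvection one_ne_zero 1 ∈ H) :
    H = ⊤ := by
  have hpow {i j : Fin 2} (hij : i ≠ j) (hmem : transvection hij 1 ∈ H) (c : ZMod p) :
      transvection hij c ∈ H := by
    obtain ⟨m, rfl⟩ := ZMod.natCast_zmod_surjective c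
    induction m with
    | zero => simp only [Nat.cast_zero, transvection_coeff_zero, one_mem]
    | succ m ih =>
      rw [Nat.cast_succ, transvection_add]
      exact mul_mem ih hmem
  refine (Subgroup.eq_top_iff' H).mpr fun A ↦
    SL2.transvection_induction (· ∈ H) (fun i j hij c ↦ ?_) (fun _ _ ↦ mul_mem) A
  fin_cases i <;> fin_cases j
  · exact absurd rfl hij
  · exact hpow hij hupper c
  · exact hpow hij hlower c
  · exact absurd rfl hij

/-- Reduction modulo `3`. -/
def reduceModThree : SL(2, ZMod 9) →* SL(2, ZMod 3) :=
  SpecialLinearGroup.map (ZMod.castHom (by decide) (ZMod 3))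

/-- The quaternion `i`. -/
def quaternionI : SL(2, ZMod 9) := ⟨!![0, -1; 1, 0], by decide⟩

/-- The quaternion `j`; its square is `-1` because `1 + 4² = -1` in `ℤ/9`. -/
def quaternionJ : SL(2, ZMod 9) := ⟨!![1, 4; 4, -1], by decide⟩

/-- The elements `±i, ±j, ±k` of the quaternion group; omitting the central elements `±1` does not
change the normalizer. -/
def quaternionUnits : Finset SL(2, ZMod 9) :=
  {quaternionI, -quaternionI, quaternionJ, -quaternionJ, quaternionI * quaternionJ,
    -(quaternionI * quaternionJ)}

theorem reduceModThree_injOn_quaternionUnits :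
    Set.InjOn reduceModThree (quaternionUnits : Set SL(2, ZMod 9)) :=
  Finset.injOn_of_card_image_eq (by decide +kernel)

theorem mem_normalizer_quaternionUnits {g : SL(2, ZMod 9)}
    (h : quaternionUnits.image (MulAut.conj g) ⊆ quaternionUnits) :
    g ∈ Subgroup.normalizer (quaternionUnits : Set SL(2, ZMod 9)) :=
  Subgroup.mem_normalizer_fintype fun _ hq ↦ h (Finset.mem_image_of_mem (MulAut.conj g) hq)

-- The chosen lifts of the two transvections are Hurwitz units `(±1 ± i ± j ± k) / 2`.
theorem map_normalizer_quaternionUnits :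
    (Subgroup.normalizer (quaternionUnits : Set SL(2, ZMod 9))).map reduceModThree = ⊤ := by
  apply eq_top_of_transvection_one_mem
  · exact ⟨⟨!![1, 7; 6, 7], by decide⟩, mem_normalizer_quaternionUnits (by decide +kernel),
      by decide +kernel⟩
  · exact ⟨⟨!![1, 6; 7, 7], by decide⟩, mem_normalizer_quaternionUnits (by decide +kernel),
      by decide +kernel⟩

theorem eq_scalar_of_commute_quaternions {R : Type*} [CommRing R] (h2 : IsUnit (2 : R)) {x : R}
    {M : Matrix (Fin 2) (Fin 2) R} (hi : Commute !![0, -1; 1, 0] M)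
    (hj : Commute !![1, x; x, -1] M) : M = scalar (Fin 2) (M 0 0) := by
  have hi₀ : -M 1 0 = M 0 1 := by
    simpa [mul_apply, Fin.sum_univ_two] using congr_fun₂ hi.eq 0 0
  have hi₁ : M 1 1 = M 0 0 := by
    simpa [mul_apply, Fin.sum_univ_two] using congr_fun₂ hi.eq 0 1
  have hj₁ : M 0 1 + x * M 1 1 = M 0 0 * x + -M 0 1 := by
    simpa [mul_apply, Fin.sum_univ_two] using congr_fun₂ hj.eq 0 1
  have hb : M 0 1 = 0 := h2.mul_right_eq_zero.mp (by linear_combination hj₁ - x * hi₁)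
  ext i j
  fin_cases i <;> fin_cases j
  · simp
  · simpa using hb
  · simpa [hb] using hi₀
  · simpa using hi₁

theorem eq_one_of_commute_quaternions {g : SL(2, ZMod 9)} (hi : Commute quaternionI g)
    (hj : Commute quaternionJ g) (hg : reduceModThree g = 1) : g = 1 := by
  have hscalar : g.1 = scalar (Fin 2) (g.1 0 0) :=
    eq_scalar_of_commute_quaternions (IsUnit.of_mul_eq_one 5 (by decide))
      (congrArg Subtype.val hi.eq) (congrArg Subtype.val hj.eq)
  have hdet : g.1 0 0 ^ 2 = 1 := by
    simpa using (congrArg det hscalar).symm.trans g.det_coe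
  have hmod : ZMod.castHom (by decide : 3 ∣ 9) (ZMod 3) (g.1 0 0) = 1 :=
    congr_fun₂ (congrArg Subtype.val hg) 0 0
  have hone : ∀ a : ZMod 9, a ^ 2 = 1 →
    ZMod.castHom (by decide : 3 ∣ 9) (ZMod 3) a = 1 → a = 1 := by decide
  exact Subtype.ext (by rw [hscalar, hone _ hdet hmod, map_one]; rfl)

theorem disjoint_normalizer_quaternionUnits_ker_reduceModThree :
    Disjoint (Subgroup.normalizer (quaternionUnits : Set SL(2, ZMod 9))) reduceModThree.ker := by
  rw [Subgroup.disjoint_def]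
  intro g hgQ hgker
  have hg : g ∈ Subgroup.centralizer (quaternionUnits : Set SL(2, ZMod 9)) :=
    normalizer_inf_ker_le_centralizer reduceModThree_injOn_quaternionUnits ⟨hgQ, hgker⟩
  exact eq_one_of_commute_quaternions (hg _ (by simp [quaternionUnits]))
    (hg _ (by simp [quaternionUnits])) hgker

theorem exists_rightInverse_reduceModThree :
    ∃ s : SL(2, ZMod 3) →* SL(2, ZMod 9), Function.RightInverse s reduceModThree :=
  exists_rightInverse_of_disjoint_ker_of_map_eq_top
    disjoint_normalizer_quaternionUnits_ker_reduceModThree map_normalizer_quaternionUnits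

end QuaternionGroup

/-- The groups `SL(2, ℤ/9ℤ)` and `SL(2, 𝔽₃[ε])` are isomorphic, where `𝔽₃[ε]` is the ring
of dual numbers over the field with three elements. -/
theorem sl2_zmod9_iso_sl2_dualNumbers :
    Nonempty (Matrix.SpecialLinearGroup (Fin 2) (ZMod 9) ≃*
      Matrix.SpecialLinearGroup (Fin 2) (DualNumber (ZMod 3))) := by
  obtain ⟨s, hs⟩ := exists_rightInverse_reduceModThree
  exact (FirstOrderThickening.zmodSq 3).nonempty_specialLinearGroup_mulEquiv
    (.dualNumber (ZMod 3)) hs (FirstOrderThickening.rightInverse_map_inlHom (ZMod 3))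
end
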